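/- Let n ≥ 1, m ≥ 1, and let c_1, …, c_m be clauses over Boolean variables x_1, …, x_n, each clause a nonempty set of literals over these variables such that no clause contains both a variable and its negation. Define the digraph G = (V, E) as follows. V contains vertices x'_i, x_i^0, x_i^1 for 1 ≤ i ≤ n; vertices c'_j for 1 ≤ j ≤ m; a vertex c_j^k for every pair (j, k) such that x_k ∈ c_j or ¬x_k ∈ c_j; and two vertices f_1, f_2. E consists of the edges (x'_i, x_i^0) and (x'_i, x_i^1) for 1 ≤ i ≤ n; (x_i^0, x'_{i+1}) and (x_i^1, x'_{i+1}) for 1 ≤ i ≤ n−1; (x_n^0, c'_1) and (x_n^1, c'_1); (c'_j, c_j^k) for every vertex c_j^k; (c_j^k, c'_{j+1}) for every 1 ≤ j ≤ m−1 and every vertex c_j^k; (c_m^k, f_1) for every vertex c_m^k; (f_1, f_2); and (f_2, x'_1). Let R consist of the pairs (x_k^1, c_j^k) for every j, k with x_k ∈ c_j; the pairs (x_k^0, c_j^k) for every j, k with ¬x_k ∈ c_j; and the pairs (x'_1, f_1) and (f_1, f_2). Then G is strongly connected, and G contains a path satisfying the First-Visits conditions for R if and only if there exists a truth assignment to x_1,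 …, x_n satisfying every clause c_1, …, c_m. -/

import Mathlib

/-- A path of length `k` in the digraph with edge relation `E`. -/
def IsPath {V : Type*} (E : V → V → Prop) (k : ℕ) (ρ : ℕ → V) : Prop :=
  ∀ i < k, E (ρ i) (ρ (i + 1))

/-- The path `ρ 0, …, ρ k` satisfies the First-Visits conditions for `R`. -/
def FirstVisits {V : Type*} (R : Set (V × V)) (k : ℕ) (ρ : ℕ → V) : Prop :=
  ∀ p ∈ R, (∃ i ≤ k, ρ i = p.1) ∧ ∀ j ≤ k, ρ j = p.2 → ∃ i < j, ρ i = p.1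

/-- The (potential) vertices of the digraph built from a CNF formula with `n`
variables and `m` clauses: `xprime i` is `x'_{i+1}`, `xval i b` is
`x_{i+1}^b`, `cprime j` is `c'_{j+1}`, `cvar j k` is `c_{j+1}^{k+1}` (only
present when variable `x_{k+1}` occurs in clause `c_{j+1}`), plus `f1, f2`.
Indices are 0-based. -/
inductive Vtx (n m : ℕ) where
  | xprime (i : Fin n)
  | xval (i : Fin n) (b : Bool)
  | cprime (j : Fin m)
  | cvar (j : Fin m) (k : Fin n)
  | f1
  | f2
deriving DecidableEq

/-- `pol j k = some true` means the literal `x_{k+1}` occurs in clause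
`c_{j+1}`, `pol j k = some false` means `¬x_{k+1}` occurs in it, and
`pol j k = none` means the variable `x_{k+1}` does not occur in `c_{j+1}`.
(This representation ensures no clause contains both a variable and its
negation.) A vertex is valid if it belongs to the constructed digraph. -/
def VtxValid {n m : ℕ} (pol : Fin m → Fin n → Option Bool) : Vtx n m → Prop
  | .cvar j k => pol j k ≠ none
  | _ => True

/-- The edges of the digraph built from the CNF formula `pol`. -/
inductive Edge {n m : ℕ} (pol : Fin m → Fin n → Option Bool) :
    Vtx n m → Vtx n m → Prop where
  | xpx (i : Fin n) (b : Bool) : Edge pol (.xprime i) (.xval i b)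
  | xxp (i i' : Fin n) (b : Bool) (h : (i' : ℕ) = (i : ℕ) + 1) :
      Edge pol (.xval i b) (.xprime i')
  | xc (i : Fin n) (b : Bool) (j : Fin m) (hi : (i : ℕ) = n - 1)
      (hj : (j : ℕ) = 0) : Edge pol (.xval i b) (.cprime j)
  | cc (j : Fin m) (k : Fin n) (h : pol j k ≠ none) :
      Edge pol (.cprime j) (.cvar j k)
  | cvc (j j' : Fin m) (k : Fin n) (h : pol j k ≠ none)
      (hj : (j' : ℕ) = (j : ℕ) + 1) : Edge pol (.cvar j k) (.cprime j')
  | cf (j : Fin m) (k : Fin n) (h : pol j k ≠ none) (hj : (j : ℕ) = m - 1) :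
      Edge pol (.cvar j k) .f1
  | ff : Edge pol .f1 .f2
  | fx (i : Fin n) (hi : (i : ℕ) = 0) : Edge pol .f2 (.xprime i)

/-- The constraint relation `R`: pairs `(x_k^1, c_j^k)` when `x_k ∈ c_j`,
pairs `(x_k^0, c_j^k)` when `¬x_k ∈ c_j`, plus `(x'_1, f_1)` and `(f_1, f_2)`. -/
inductive SatR {n m : ℕ} (pol : Fin m → Fin n → Option Bool) :
    Vtx n m → Vtx n m → Prop where
  | lit (j : Fin m) (k : Fin n) (b : Bool) (h : pol j k = some b) :
      SatR pol (.xval k b) (.cvar j k)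
  | xf (i : Fin n) (hi : (i : ℕ) = 0) : SatR pol (.xprime i) .f1
  | ff : SatR pol .f1 .f2


/-- The position of a vertex in one round of the digraph. -/
def vrank {n m : ℕ} : Vtx n m → ℕ
  | .xprime i => 2 * i
  | .xval i _ => 2 * i + 1
  | .cprime j => 2 * n + 2 * j
  | .cvar j _ => 2 * n + 2 * j + 1
  | .f1 => 2 * n + 2 * m
  | .f2 => 2 * n + 2 * m + 1

theorem vrank_lt {n m : ℕ} (u : Vtx n m) : vrank u < 2 * n + 2 * m + 2 := by
  cases u <;> simp only [vrank] <;> omega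

theorem edge_rank {n m : ℕ} {pol : Fin m → Fin n → Option Bool} {u v : Vtx n m}
    (h : Edge pol u v) (hu : u ≠ .f2) : vrank v = vrank u + 1 := by
  cases h <;> simp only [vrank] <;> first | omega | exact absurd rfl hu

theorem exists_succ {n m : ℕ} (hm : 1 ≤ m) (pol : Fin m → Fin n → Option Bool)
    (hne : ∀ j : Fin m, ∃ k : Fin n, pol j k ≠ none)
    (u : Vtx n m) (hv : VtxValid pol u) (hu : u ≠ .f2) :
    ∃ v, VtxValid pol v ∧ Edge pol u v := by
  cases u with
  | xprime i => exact ⟨.xval i true, trivial, .xpx i true⟩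
  | xval i b =>
    by_cases h : (i : ℕ) + 1 < n
    · exact ⟨.xprime ⟨i + 1, h⟩, trivial, .xxp _ _ _ rfl⟩
    · exact ⟨.cprime ⟨0, hm⟩, trivial, .xc _ _ _ (by omega) rfl⟩
  | cprime j =>
    obtain ⟨k, hk⟩ := hne j
    exact ⟨.cvar j k, hk, .cc _ _ hk⟩
  | cvar j k =>
    by_cases h : (j : ℕ) + 1 < m
    · exact ⟨.cprime ⟨j + 1, h⟩, trivial, .cvc _ _ _ hv rfl⟩
    · exact ⟨.f1, trivial, .cf _ _ hv (by omega)⟩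
  | f1 => exact ⟨.f2, trivial, .ff⟩
  | f2 => exact absurd rfl hu

theorem exists_pred {n m : ℕ} (hn : 1 ≤ n) (hm : 1 ≤ m)
    (pol : Fin m → Fin n → Option Bool)
    (hne : ∀ j : Fin m, ∃ k : Fin n, pol j k ≠ none)
    (v : Vtx n m) (hv : VtxValid pol v) :
    ∃ u, VtxValid pol u ∧ Edge pol u v := by
  cases v with
  | xprime i =>
    by_cases h : (i : ℕ) = 0
    · exact ⟨.f2, trivial, .fx _ h⟩
    · exact ⟨.xval ⟨i - 1, by omega⟩ true, trivial, .xxp _ _ _ (by simp only []; omega)⟩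
  | xval i b => exact ⟨.xprime i, trivial, .xpx i b⟩
  | cprime j =>
    by_cases h : (j : ℕ) = 0
    · exact ⟨.xval ⟨n - 1, by omega⟩ true, trivial, .xc _ _ _ rfl h⟩
    · obtain ⟨k, hk⟩ := hne ⟨j - 1, by omega⟩
      exact ⟨.cvar ⟨j - 1, by omega⟩ k, hk, .cvc _ _ _ hk (by simp only []; omega)⟩
  | cvar j k => exact ⟨.cprime j, trivial, .cc _ _ hv⟩
  | f1 =>
    obtain ⟨k, hk⟩ := hne ⟨m - 1, by omega⟩
    exact ⟨.cvar ⟨m - 1, by omega⟩ k, hk, .cf _ _ hk rfl⟩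
  | f2 => exact ⟨.f1, trivial, .ff⟩

/-- The `r`-th vertex of the round given by assignment `a` and clause choices `κ`. -/
def wround {n m : ℕ} (a : Fin n → Bool) (κ : Fin m → Fin n) (r : ℕ) : Vtx n m :=
  if h : r < 2 * n then
    if r % 2 = 0 then .xprime ⟨r / 2, by omega⟩
    else .xval ⟨r / 2, by omega⟩ (a ⟨r / 2, by omega⟩)
  else if h' : r < 2 * n + 2 * m then
    if r % 2 = 0 then .cprime ⟨(r - 2 * n) / 2, by omega⟩
    else .cvar ⟨(r - 2 * n) / 2, by omega⟩ (κ ⟨(r - 2 * n) / 2, by omega⟩)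
  else if r = 2 * n + 2 * m then .f1 else .f2

section
variable {n m : ℕ} (a : Fin n → Bool) (κ : Fin m → Fin n)

theorem w_xprime (i : Fin n) : wround a κ (2 * i) = .xprime i := by
  have h1 : 2 * (i : ℕ) < 2 * n := by omega
  simp [wround]

theorem w_xval (i : Fin n) : wround a κ (2 * i + 1) = .xval i (a i) := by
  have h1 : 2 * (i : ℕ) + 1 < 2 * n := by omega
  have h2 : (2 * (i : ℕ) + 1) / 2 = i := by omega
  have h3 : (2 * (i : ℕ) + 1) % 2 = 1 := by omega
  simp [wround, h1, h2, h3]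

theorem w_cprime (j : Fin m) : wround a κ (2 * n + 2 * j) = .cprime j := by
  have h1 : ¬ 2 * n + 2 * (j : ℕ) < 2 * n := by omega
  have h2 : 2 * n + 2 * (j : ℕ) < 2 * n + 2 * m := by omega
  have h3 : (2 * n + 2 * (j : ℕ)) % 2 = 0 := by omega
  simp [wround, h3]

theorem w_cvar (j : Fin m) : wround a κ (2 * n + 2 * j + 1) = .cvar j (κ j) := by
  have h1 : ¬ 2 * n + 2 * (j : ℕ) + 1 < 2 * n := by omega
  have h2 : 2 * n + 2 * (j : ℕ) + 1 < 2 * n + 2 * m := by omega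
  have h3 : (2 * n + 2 * (j : ℕ) + 1) % 2 = 1 := by omega
  have h4 : (2 * n + 2 * (j : ℕ) + 1 - 2 * n) / 2 = j := by omega
  simp [wround, h1, h2, h3, h4]

theorem w_f1 : wround a κ (2 * n + 2 * m) = .f1 := by
  simp [wround]

theorem w_f2 : wround a κ (2 * n + 2 * m + 1) = .f2 := by
  have h1 : ¬ 2 * n + 2 * m + 1 < 2 * n := by omega
  simp [wround, h1]

theorem pos_cases (r : ℕ) (hr : r < 2 * n + 2 * m + 2) :
    (∃ i : Fin n, r = 2 * i) ∨ (∃ i : Fin n, r = 2 * i + 1) ∨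
    (∃ j : Fin m, r = 2 * n + 2 * j) ∨ (∃ j : Fin m, r = 2 * n + 2 * j + 1) ∨
    r = 2 * n + 2 * m ∨ r = 2 * n + 2 * m + 1 := by
  by_cases h : r < 2 * n
  · rcases Nat.even_or_odd' r with ⟨c, hc | hc⟩
    · exact .inl ⟨⟨c, by omega⟩, hc⟩
    · exact .inr (.inl ⟨⟨c, by omega⟩, hc⟩)
  by_cases h' : r < 2 * n + 2 * m
  · rcases Nat.even_or_odd' (r - 2 * n) with ⟨c, hc | hc⟩
    · exact .inr (.inr (.inl ⟨⟨c, by omega⟩, by simp only []; omega⟩))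
    · exact .inr (.inr (.inr (.inl ⟨⟨c, by omega⟩, by simp only []; omega⟩)))
  · omega

theorem w_rank (r : ℕ) (hr : r < 2 * n + 2 * m + 2) : vrank (wround a κ r) = r := by
  rcases pos_cases r hr with ⟨i, rfl⟩ | ⟨i, rfl⟩ | ⟨i, rfl⟩ | ⟨i, rfl⟩ | rfl | rfl
  · rw [w_xprime]; rfl
  · rw [w_xval]; rfl
  · rw [w_cprime]; rfl
  · rw [w_cvar]; rfl
  · rw [w_f1]; rfl
  · rw [w_f2]; rfl

theorem w_valid (pol : Fin m → Fin n → Option Bool) (hκ : ∀ j, pol j (κ j) ≠ none) (r : ℕ) :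
    VtxValid pol (wround a κ r) := by
  unfold wround
  split_ifs <;> first | trivial | exact hκ _

theorem w_edge (hm : 1 ≤ m) (pol : Fin m → Fin n → Option Bool)
    (hκ : ∀ j, pol j (κ j) ≠ none) (r : ℕ)
    (hr : r + 1 < 2 * n + 2 * m + 2) : Edge pol (wround a κ r) (wround a κ (r + 1)) := by
  rcases pos_cases (n := n) (m := m) r (by omega) with ⟨i, rfl⟩ | ⟨i, rfl⟩ | ⟨i, rfl⟩ | ⟨i, rfl⟩ | rfl | rfl
  · rw [w_xprime, w_xval]; exact .xpx _ _
  · rw [w_xval]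
    by_cases h : (i : ℕ) + 1 < n
    · have := w_xprime a κ ⟨i + 1, h⟩
      rw [show 2 * (i : ℕ) + 1 + 1 = 2 * ((i : ℕ) + 1) by ring, this]
      exact .xxp _ _ _ rfl
    · have := w_cprime a κ ⟨0, hm⟩
      rw [show 2 * (i : ℕ) + 1 + 1 = 2 * n + 2 * 0 by omega, this]
      exact .xc _ _ _ (by omega) rfl
  · rw [w_cprime, w_cvar]; exact .cc _ _ (hκ _)
  · rw [w_cvar]
    by_cases h : (i : ℕ) + 1 < m
    · have := w_cprime a κ ⟨i + 1, h⟩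
      rw [show 2 * n + 2 * (i : ℕ) + 1 + 1 = 2 * n + 2 * ((i : ℕ) + 1) by ring, this]
      exact .cvc _ _ _ (hκ _) rfl
    · rw [show 2 * n + 2 * (i : ℕ) + 1 + 1 = 2 * n + 2 * m by omega, w_f1]
      exact .cf _ _ (hκ _) (by omega)
  · rw [w_f1, w_f2]; exact .ff
  · omega
end

/-- Two rounds: the first with assignment `a`, the second with its complement. -/
def tworound {n m : ℕ} (a : Fin n → Bool) (κ : Fin m → Fin n) (i : ℕ) : Vtx n m :=
  if i < 2 * n + 2 * m + 2 then wround a κ i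
  else wround (fun k => !(a k)) κ (i - (2 * n + 2 * m + 2))

theorem two_first {n m : ℕ} (a : Fin n → Bool) (κ : Fin m → Fin n) (i : ℕ)
    (h : i < 2 * n + 2 * m + 2) : tworound a κ i = wround a κ i := if_pos h

theorem two_second {n m : ℕ} (a : Fin n → Bool) (κ : Fin m → Fin n) (i : ℕ) :
    tworound a κ (2 * n + 2 * m + 2 + i) = wround (fun k => !(a k)) κ i := by
  unfold tworound
  rw [if_neg (by omega), Nat.add_sub_cancel_left]

theorem two_rank {n m : ℕ} (a : Fin n → Bool) (κ : Fin m → Fin n) (i : ℕ)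
    (h : i < 2 * (2 * n + 2 * m + 2)) : vrank (tworound a κ i) ≤ i := by
  unfold tworound
  split_ifs with h1
  · rw [w_rank _ _ _ h1]
  · rw [w_rank _ _ _ (by omega)]; omega

theorem two_cvar {n m : ℕ} (a : Fin n → Bool) (κ : Fin m → Fin n) (i : ℕ)
    (j : Fin m) (k : Fin n) (h : tworound a κ i = .cvar j k) : k = κ j := by
  unfold tworound wround at h
  split_ifs at h <;> simp only [Vtx.cvar.injEq, reduceCtorEq] at h
  all_goals
    obtain ⟨h1, h2⟩ := h
    subst h1
    exact h2.symm

theorem strong {n m : ℕ} (hn : 1 ≤ n) (hm : 1 ≤ m)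
    (pol : Fin m → Fin n → Option Bool)
    (hne : ∀ j : Fin m, ∃ k : Fin n, pol j k ≠ none) :
    ∀ u v : {v : Vtx n m // VtxValid pol v},
      Relation.ReflTransGen
        (fun a b : {v : Vtx n m // VtxValid pol v} => Edge pol a.1 b.1) u v := by
  have h1 : ∀ d : ℕ, ∀ u : {v : Vtx n m // VtxValid pol v},
      2 * n + 2 * m + 2 - vrank u.1 ≤ d → Relation.ReflTransGen
        (fun a b : {v : Vtx n m // VtxValid pol v} => Edge pol a.1 b.1) u ⟨.f2, trivial⟩ := by
    intro d
    induction d with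
    | zero => intro u hu; have := vrank_lt u.1; omega
    | succ d ih =>
      intro u hu
      by_cases hf : u.1 = .f2
      · have : u = ⟨.f2, trivial⟩ := Subtype.ext hf
        rw [this]
      · obtain ⟨v, hv, he⟩ := exists_succ hm pol hne u.1 u.2 hf
        have := edge_rank he hf
        exact .head (b := ⟨v, hv⟩) he (ih ⟨v, hv⟩ (by simp only []; omega))
  have h2 : ∀ d : ℕ, ∀ v : {v : Vtx n m // VtxValid pol v},
      vrank v.1 ≤ d → Relation.ReflTransGen
        (fun a b : {v : Vtx n m // VtxValid pol v} => Edge pol a.1 b.1) ⟨.f2, trivial⟩ v := by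
    intro d
    induction d with
    | zero =>
      intro v hv
      obtain ⟨u, hu, he⟩ := exists_pred hn hm pol hne v.1 v.2
      by_cases hf : u = .f2
      · subst hf; exact .single he
      · have := edge_rank he hf; omega
    | succ d ih =>
      intro v hv
      obtain ⟨u, hu, he⟩ := exists_pred hn hm pol hne v.1 v.2
      by_cases hf : u = .f2
      · subst hf; exact .single he
      · have := edge_rank he hf
        exact .tail (b := ⟨u, hu⟩) (ih ⟨u, hu⟩ (by simp only []; omega)) he
  exact fun u v => (h1 _ u le_rfl).trans (h2 _ v le_rfl)

theorem sat_reduction {n m : ℕ} (hn : 1 ≤ n) (hm : 1 ≤ m)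
    (pol : Fin m → Fin n → Option Bool)
    (hne : ∀ j : Fin m, ∃ k : Fin n, pol j k ≠ none) :
    (∀ u v : {v : Vtx n m // VtxValid pol v},
      Relation.ReflTransGen
        (fun a b : {v : Vtx n m // VtxValid pol v} => Edge pol a.1 b.1) u v) ∧
    ((∃ (k : ℕ) (ρ : ℕ → {v : Vtx n m // VtxValid pol v}),
        IsPath (fun a b : {v : Vtx n m // VtxValid pol v} => Edge pol a.1 b.1) k ρ ∧
        FirstVisits
          {p : {v : Vtx n m // VtxValid pol v} × {v : Vtx n m // VtxValid pol v} |
            SatR pol p.1.1 p.2.1} k ρ) ↔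
      ∃ a : Fin n → Bool, ∀ j : Fin m, ∃ k : Fin n, pol j k = some (a k)) := by
  refine ⟨strong hn hm pol hne, ?_, ?_⟩
  · rintro ⟨K, ρ, hp, hf⟩
    have hf1 : ∃ t, t ≤ K ∧ (ρ t).1 = .f1 := by
      obtain ⟨⟨t, ht, h⟩, -⟩ := hf (⟨.f1, trivial⟩, ⟨.f2, trivial⟩) SatR.ff
      exact ⟨t, ht, by rw [h]⟩
    classical
    obtain ⟨t, ⟨htK, ht⟩, hmin⟩ : ∃ t, (t ≤ K ∧ (ρ t).1 = .f1) ∧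
        ∀ s < t, ¬ (s ≤ K ∧ (ρ s).1 = .f1) :=
      ⟨Nat.find hf1, Nat.find_spec hf1, fun s hs => Nat.find_min hf1 hs⟩
    have hnf2 : ∀ s ≤ t, (ρ s).1 ≠ .f2 := by
      intro s hs h
      obtain ⟨i, hi, h'⟩ := (hf (⟨.f1, trivial⟩, ⟨.f2, trivial⟩) SatR.ff).2 s (by omega)
        (Subtype.ext h)
      exact hmin i (by omega) ⟨by omega, by rw [h']⟩
    have hrk : ∀ s ≤ t, vrank (ρ s).1 = vrank (ρ 0).1 + s := by
      intro s
      induction s with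
      | zero => intro _; rfl
      | succ s ih =>
        intro hs
        rw [edge_rank (hp s (by omega)) (hnf2 s (by omega)), ih (by omega)]
        ring
    have h0 : vrank (ρ 0).1 = 0 := by
      obtain ⟨i, hi, h⟩ := (hf (⟨.xprime ⟨0, hn⟩, trivial⟩, ⟨.f1, trivial⟩)
        (SatR.xf _ rfl)).2 t htK (Subtype.ext ht)
      have := hrk i hi.le
      rw [h] at this
      have h2 : 2 * 0 = vrank (ρ 0).1 + i := this
      omega
    simp only [h0, zero_add] at hrk
    have hT : t = 2 * n + 2 * m := by
      rw [← hrk t le_rfl, ht]; rfl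
    refine ⟨fun k => decide ((ρ (2 * k + 1)).1 = .xval k true), fun j => ?_⟩
    have hj := hrk (2 * n + 2 * j + 1) (by omega)
    obtain ⟨k, hk⟩ : ∃ k, (ρ (2 * n + 2 * j + 1)).1 = .cvar j k := by
      generalize (ρ (2 * n + 2 * j + 1)).1 = v at hj
      cases v with
      | cvar j' k =>
        simp only [vrank] at hj
        have : j' = j := by apply Fin.ext; omega
        exact ⟨k, by rw [this]⟩
      | _ => simp only [vrank] at hj; omega
    have hval : pol j k ≠ none := by
      have := (ρ (2 * n + 2 * j + 1)).2
      rw [hk] at this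
      exact this
    obtain ⟨b, hb⟩ := Option.ne_none_iff_exists'.mp hval
    obtain ⟨i, hi, h⟩ := (hf (⟨.xval k b, trivial⟩, ⟨.cvar j k, hval⟩)
      (SatR.lit j k b hb)).2 (2 * n + 2 * j + 1) (by omega) (Subtype.ext hk)
    have hi2 := hrk i (by omega)
    rw [h] at hi2
    simp only [vrank] at hi2
    refine ⟨k, ?_⟩
    have e : (ρ (2 * k + 1)).1 = .xval k b := by rw [hi2, h]
    simp only [hb, e]
    cases b <;> simp
  · rintro ⟨a, ha⟩
    choose κ hκ using ha
    have hκ' : ∀ j, pol j (κ j) ≠ none := fun j => by rw [hκ j]; simp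
    have hval : ∀ i, VtxValid pol (tworound a κ i) := by
      intro i
      unfold tworound
      split_ifs <;> exact w_valid _ _ _ hκ' _
    refine ⟨2 * (2 * n + 2 * m + 2) - 1, fun i => ⟨tworound a κ i, hval i⟩, ?_, ?_⟩
    · intro i hi
      change Edge pol (tworound a κ i) (tworound a κ (i + 1))
      by_cases h : i + 1 < 2 * n + 2 * m + 2
      · rw [two_first _ _ _ h, two_first _ _ _ (by omega)]
        exact w_edge a κ hm pol hκ' i h
      by_cases h' : i + 1 = 2 * n + 2 * m + 2
      · have e : tworound a κ (i + 1) = .xprime ⟨0, hn⟩ := by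
          rw [h']
          exact (two_second a κ 0).trans (w_xprime _ κ ⟨0, hn⟩)
        rw [e, two_first _ _ _ (by omega), show i = 2 * n + 2 * m + 1 by omega, w_f2]
        exact .fx _ rfl
      · obtain ⟨s, rfl⟩ : ∃ s, i = 2 * n + 2 * m + 2 + s := ⟨i - (2 * n + 2 * m + 2), by omega⟩
        rw [add_assoc _ s 1, two_second, two_second]
        exact w_edge _ κ hm pol hκ' s (by omega)
    · rintro ⟨⟨u, hu⟩, ⟨v, hv⟩⟩ hR
      simp only [Subtype.mk.injEq]
      change SatR pol u v at hR
      cases hR with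
      | lit j k b hb =>
        constructor
        · by_cases hab : b = a k
          · exact ⟨2 * k + 1, by omega, by
              rw [two_first _ _ _ (by omega), w_xval, hab]⟩
          · refine ⟨2 * n + 2 * m + 2 + (2 * k + 1), by omega, ?_⟩
            rw [two_second, w_xval]
            congr 1
            revert hab
            cases b <;> cases a k <;> simp
        · intro i hi h
          have hk := two_cvar _ _ _ _ _ h
          have hr := two_rank a κ i (by omega)
          rw [h] at hr
          simp only [vrank] at hr
          have hab : b = a k := by
            have := hκ j
            rw [← hk, hb] at this
            exact Option.some.inj this
          exact ⟨2 * k + 1, by omega, by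
              rw [two_first _ _ _ (by omega), w_xval, hab]⟩
      | xf i0 h0 =>
        have e : tworound a κ 0 = .xprime i0 := by
          rw [two_first _ _ _ (by omega), ← w_xprime a κ i0, h0]
        refine ⟨⟨0, by omega, e⟩, fun i hi h => ⟨0, ?_, e⟩⟩
        have hr := two_rank a κ i (by omega)
        rw [h] at hr
        simp only [vrank] at hr
        omega
      | ff =>
        have e : tworound a κ (2 * n + 2 * m) = .f1 := by
          rw [two_first _ _ _ (by omega), w_f1]
        refine ⟨⟨_, by omega, e⟩, fun i hi h => ⟨_, ?_, e⟩⟩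
        have hr := two_rank a κ i (by omega)
        rw [h] at hr
        simp only [vrank] at hr
        omega
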